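/- Let 0 < q ≤ p < 2. There exists a constant A(p,q) > 0, depending only on p and q, such that for every Banach space X and every injective map τ : D → D, the vector-valued rearrangement operators satisfy ‖T_{τ,q} ⊗ Id_X‖_q^{q/(2−q)} ≤ A(p,q) · ‖T_{τ,p} ⊗ Id_X‖_p^{p/(2−p)} (inequality in [0,∞]). -/

import Mathlib

open MeasureTheory Set
open scoped ENNReal NNReal Classical

noncomputable section

/-- A dyadic subinterval of `[0,1)`: the half-open interval
`[k/2^n, (k+1)/2^n)` with `k < 2^n`. -/
structure DyadicI where
  n : ℕ
  k : ℕ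
  hk : k < 2 ^ n

instance : Nonempty DyadicI := ⟨⟨0, 0, by norm_num⟩⟩

namespace DyadicI

/-- The length `|I| = 2^{-n}` of a dyadic interval. -/
def len (I : DyadicI) : ℝ := (2 : ℝ) ^ (-(I.n : ℤ))

/-- The left endpoint `k 2^{-n}` of a dyadic interval. -/
def lep (I : DyadicI) : ℝ := (I.k : ℝ) * I.len

/-- The underlying point set `[k/2^n, (k+1)/2^n)` of a dyadic interval. -/
def toSet (I : DyadicI) : Set ℝ := Set.Ico I.lep (I.lep + I.len)

/-- The `L^∞`-normalized Haar function `h_I`: `1` on the left half of `I`,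
`-1` on the right half of `I`, `0` off `I`. -/
def haar (I : DyadicI) (t : ℝ) : ℝ :=
  if t ∈ Set.Ico I.lep (I.lep + I.len / 2) then 1
  else if t ∈ Set.Ico (I.lep + I.len / 2) (I.lep + I.len) then -1
  else 0

end DyadicI

open DyadicI

section Defs

variable {X : Type*} [NormedAddCommGroup X] [NormedSpace ℝ X]

/-- The square function `𝕊(f)` of the `X`-valued Haar expansion `f = ∑_{I ∈ s} x_I h_I`:
`𝕊(f)(t) = (E_ε ‖∑_I ε_I x_I h_I(t)‖²)^{1/2}`, the average being taken over all
choices of signs `ε_I ∈ {±1}`, `I ∈ s`. -/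
def sqFn (s : Finset DyadicI) (x : DyadicI → X) (t : ℝ) : ℝ :=
  Real.sqrt ((∑ ε : {I // I ∈ s} → Bool,
    ‖∑ I ∈ s.attach, ((if ε I then (1 : ℝ) else -1) * haar I.1 t) • x I.1‖ ^ 2) /
      2 ^ s.card)

/-- The `H^p_X` (quasi-)norm of `f = ∑_{I ∈ s} x_I h_I`:
`‖f‖ = (∫₀¹ 𝕊(f)(t)^p dt)^{1/p}`. -/
def HpNormV (p : ℝ) (s : Finset DyadicI) (x : DyadicI → X) : ℝ :=
  (∫ t in Set.Icc (0 : ℝ) 1, sqFn s x t ^ p) ^ (1 / p)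

/-- The coefficients of `(T_{τ,p} ⊗ Id_X)(f)` for `f = ∑_{I ∈ s} x_I h_I`, namely
`(T_{τ,p} ⊗ Id_X)(f) = ∑_{I ∈ s} (|I|/|τ(I)|)^{1/p} x_I h_{τ(I)}`, as a family of
coefficients indexed by the Haar support `τ(s)`. -/
def rearrCoef (τ : DyadicI → DyadicI) (p : ℝ) (s : Finset DyadicI) (x : DyadicI → X) :
    DyadicI → X :=
  fun J => ∑ I ∈ s, if τ I = J then ((len I / len (τ I)) ^ (1 / p)) • x I else 0

/-- The scalar dyadic square function `S(f) = (∑_I a_I² 1_I)^{1/2}`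
of `f = ∑_{I ∈ s} a_I h_I`. -/
def sqFnS (s : Finset DyadicI) (a : DyadicI → ℝ) (t : ℝ) : ℝ :=
  Real.sqrt (∑ I ∈ s, a I ^ 2 * Set.indicator (toSet I) (fun _ => (1 : ℝ)) t)

/-- The scalar dyadic `H^p` (quasi-)norm `‖f‖_{H^p} = ‖S(f)‖_{L^p[0,1]}`. -/
def HpNormS (p : ℝ) (s : Finset DyadicI) (a : DyadicI → ℝ) : ℝ :=
  (∫ t in Set.Icc (0 : ℝ) 1, sqFnS s a t ^ p) ^ (1 / p)

/-- The coefficients of the scalar rearrangement operator `T_{τ,p}` applied to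
`f = ∑_{I ∈ s} a_I h_I`; `T_{τ,p}` is determined by
`T_{τ,p}(h_I/|I|^{1/p}) = h_{τ(I)}/|τ(I)|^{1/p}`. -/
def rearrCoefS (τ : DyadicI → DyadicI) (p : ℝ) (s : Finset DyadicI) (a : DyadicI → ℝ) :
    DyadicI → ℝ :=
  fun J => ∑ I ∈ s, if τ I = J then ((len I / len (τ I)) ^ (1 / p)) * a I else 0

/-- The operator norm `‖T_{τ,p} ⊗ Id_X : H^p_X → H^p_X‖ ∈ [0,∞]`, computed as the
supremum over finitely supported `f` in the unit ball of `H^p_X`. -/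
def hpOpNorm (τ : DyadicI → DyadicI) (p : ℝ) (X : Type*) [NormedAddCommGroup X]
    [NormedSpace ℝ X] : ℝ≥0∞ :=
  ⨆ (s : Finset DyadicI) (x : DyadicI → X) (_ : HpNormV p s x ≤ 1),
    ENNReal.ofReal (HpNormV p (s.image τ) (rearrCoef τ p s x))

/-- The scalar operator norm `‖T_{τ,p} : H^p → H^p‖ ∈ [0,∞]`. -/
def hpOpNormS (τ : DyadicI → DyadicI) (p : ℝ) : ℝ≥0∞ :=
  ⨆ (s : Finset DyadicI) (a : DyadicI → ℝ) (_ : HpNormS p s a ≤ 1),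
    ENNReal.ofReal (HpNormS p (s.image τ) (rearrCoefS τ p s a))

/-- For `H = τ(L)` (so that `σ(J) = I` for `J = τ(I)`, `I ∈ L`), the maximal function
`μ_H(t) = sup_{J ∈ H} (|σ(J)|/|J|) 1_J(t) = sup_{I ∈ L} (|I|/|τ(I)|) 1_{τ(I)}(t)`,
as an `[0,∞]`-valued function. -/
def muSet (τ : DyadicI → DyadicI) (L : Set DyadicI) (t : ℝ) : ℝ≥0∞ :=
  ⨆ (I : DyadicI) (_ : I ∈ L),
    ENNReal.ofReal (len I / len (τ I) * Set.indicator (toSet (τ I)) (fun _ => (1 : ℝ)) t)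

/-- For `H = τ(L)` with `L` finite, the (real-valued) maximal function
`μ_H(t) = max_{I ∈ L} (|I|/|τ(I)|) 1_{τ(I)}(t)`. -/
def muFin (τ : DyadicI → DyadicI) (L : Finset DyadicI) (t : ℝ) : ℝ :=
  ((L.sup fun I =>
    Real.toNNReal (len I / len (τ I) * Set.indicator (toSet (τ I)) (fun _ => (1 : ℝ)) t) : ℝ≥0) : ℝ)

/-- The point set `L* = ⋃_{I ∈ L} I` covered by a collection of dyadic intervals. -/
def pointSet (L : Set DyadicI) : Set ℝ := ⋃ I ∈ L, toSet I

/-- The constant `C₁ = sup_{H ⊆ τ(D), H ≠ ∅} (1/|σ(H)*|) ∫₀¹ μ_H(t) dt`, where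
nonempty collections `H ⊆ τ(D)` are parametrized as `H = τ(L)` for nonempty `L ⊆ D`,
so that `σ(H)* = L*`. -/
def Cone (τ : DyadicI → DyadicI) : ℝ≥0∞ :=
  ⨆ (L : Set DyadicI) (_ : L.Nonempty),
    (∫⁻ t in Set.Icc (0 : ℝ) 1, muSet τ L t) / volume (pointSet L)

/-- The square of the dyadic BMO norm of `g = ∑_{J ∈ s} a_J h_J`:
`‖g‖_{BMO}² = sup_{I ∈ D} (1/|I|) ∑_{J ⊆ I} a_J² |J|`. -/
def bmoSq (s : Finset DyadicI) (a : DyadicI → ℝ) : ℝ≥0∞ :=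
  ⨆ I : DyadicI, ENNReal.ofReal
    ((∑ J ∈ s.filter fun J => toSet J ⊆ toSet I, a J ^ 2 * len J) / len I)

/-- The coefficients of `S_σ(g)` for `g = ∑_{J ∈ s} a_J h_J`, where `σ = τ⁻¹` on `τ(D)`:
`S_σ(h_J) = h_{σ(J)}` for `J ∈ τ(D)` and `S_σ(h_J) = 0` otherwise, so that the
coefficient of `h_K` in `S_σ(g)` is `a_{τ(K)}` if `τ(K) ∈ s`, and `0` otherwise. -/
def sSigmaCoef (τ : DyadicI → DyadicI) (s : Finset DyadicI) (a : DyadicI → ℝ) :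
    DyadicI → ℝ :=
  fun K => if τ K ∈ s then a (τ K) else 0

/-- The Haar support of `S_σ(g)` for `g` with Haar support `s`:
`σ(s ∩ τ(D))`, i.e. the preimage under `τ` of `s`. -/
def sSigmaSupp (τ : DyadicI → DyadicI) (s : Finset DyadicI) : Finset DyadicI :=
  (s.filter fun J => J ∈ Set.range τ).image (Function.invFun τ)

/-- The operator norm `‖S_σ‖_{BMO} ∈ [0,∞]` of `S_σ` with respect to the dyadic BMO
norm, computed over finitely supported Haar expansions. -/
def bmoOpNorm (τ : DyadicI → DyadicI) : ℝ≥0∞ :=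
  ⨆ (s : Finset DyadicI) (a : DyadicI → ℝ) (_ : bmoSq s a ≤ 1),
    (bmoSq (sSigmaSupp τ s) (sSigmaCoef τ s a)) ^ (1 / 2 : ℝ)

/-- The Carleson constant `⟦C⟧ = sup_{I ∈ C} (1/|I|) ∑_{J ∈ C, J ⊆ I} |J| ∈ [0,∞]`
of a collection of dyadic intervals. -/
def carleson (C : Set DyadicI) : ℝ≥0∞ :=
  ⨆ (I : DyadicI) (_ : I ∈ C),
    (∑' J : {J : DyadicI // J ∈ C ∧ toSet J ⊆ toSet I}, ENNReal.ofReal (len J.1)) /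
      ENNReal.ofReal (len I)

/-- The `L^p_X = L^p([0,1]; X)` (Bochner) norm of `f = ∑_{I ∈ s} x_I h_I`. -/
def LpNormV (p : ℝ) (s : Finset DyadicI) (x : DyadicI → X) : ℝ :=
  (∫ t in Set.Icc (0 : ℝ) 1, ‖∑ I ∈ s, haar I t • x I‖ ^ p) ^ (1 / p)

/-- The operator norm `‖T_{τ,p} ⊗ Id_X : L^p_X → L^p_X‖ ∈ [0,∞]`, computed over
finitely supported Haar expansions. -/
def lpOpNorm (τ : DyadicI → DyadicI) (p : ℝ) (X : Type*) [NormedAddCommGroup X]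
    [NormedSpace ℝ X] : ℝ≥0∞ :=
  ⨆ (s : Finset DyadicI) (x : DyadicI → X) (_ : LpNormV p s x ≤ 1),
    ENNReal.ofReal (LpNormV p (s.image τ) (rearrCoef τ p s x))

/-- The operator norm `‖T_{τ,p}^{-1} ⊗ Id_X‖ ∈ [0,∞]` on the span of
`{h_J : J ∈ τ(D)}` with the `L^p_X` norm: the map determined by
`x h_{τ(I)}/|τ(I)|^{1/p} ↦ x h_I/|I|^{1/p}`, i.e. sending
`g = ∑_{I ∈ L} x_I h_{τ(I)}` to `∑_{I ∈ L} (|τ(I)|/|I|)^{1/p} x_I h_I`. -/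
def lpInvOpNorm (τ : DyadicI → DyadicI) (p : ℝ) (X : Type*) [NormedAddCommGroup X]
    [NormedSpace ℝ X] : ℝ≥0∞ :=
  ⨆ (L : Finset DyadicI) (x : DyadicI → X)
    (_ : LpNormV p (L.image τ) (fun J => ∑ I ∈ L, if τ I = J then x I else 0) ≤ 1),
    ENNReal.ofReal (LpNormV p L fun I => ((len (τ I) / len I) ^ (1 / p)) • x I)

/-- The operator norm `‖T_{τ,1}^{-1}‖₁ ∈ [0,∞]` on the span of `{h_J : J ∈ τ(D)}`
with the dyadic `H¹` norm: the map determined by `h_{τ(I)}/|τ(I)| ↦ h_I/|I|`,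
i.e. sending `g = ∑_{I ∈ L} a_I h_{τ(I)}` to `∑_{I ∈ L} (|τ(I)|/|I|) a_I h_I`. -/
def h1InvOpNorm (τ : DyadicI → DyadicI) : ℝ≥0∞ :=
  ⨆ (L : Finset DyadicI) (a : DyadicI → ℝ)
    (_ : HpNormS 1 (L.image τ) (fun J => ∑ I ∈ L, if τ I = J then a I else 0) ≤ 1),
    ENNReal.ofReal (HpNormS 1 L fun I => (len (τ I) / len I) * a I)

/-- The Rademacher average `(E_ε ‖∑_{i<n} ε_i a_i‖^p)^{1/p}` over all choices of
signs `ε_i ∈ {±1}`. -/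
def radAvg (p : ℝ) {Y : Type*} [NormedAddCommGroup Y] [NormedSpace ℝ Y] (n : ℕ)
    (a : Fin n → Y) : ℝ :=
  ((∑ ε : Fin n → Bool, ‖∑ i, (if ε i then (1 : ℝ) else -1) • a i‖ ^ p) / 2 ^ n) ^ (1 / p)

/-- The type-`p` constant `Type_p(Y) ∈ [0,∞]`: the least `C` such that
`(E_ε ‖∑ ε_i a_i‖^p)^{1/p} ≤ C (∑ ‖a_i‖^p)^{1/p}` for all finite families in `Y`. -/
def typeConst (p : ℝ) (Y : Type*) [NormedAddCommGroup Y] [NormedSpace ℝ Y] : ℝ≥0∞ :=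
  sInf {C : ℝ≥0∞ | ∀ (n : ℕ) (a : Fin n → Y),
    ENNReal.ofReal (radAvg p n a) ≤ C * ENNReal.ofReal ((∑ i, ‖a i‖ ^ p) ^ (1 / p))}

/-- The UMD property of a Banach space `E`: for each `1 < r < ∞` the Haar system is
unconditional in `L^r_E`. -/
def IsUMD (E : Type*) [NormedAddCommGroup E] [NormedSpace ℝ E] : Prop :=
  ∀ r : ℝ, 1 < r → ∃ β : ℝ, ∀ (s : Finset DyadicI) (x : DyadicI → E) (ε : DyadicI → ℝ),
    (∀ I, ε I = 1 ∨ ε I = -1) →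
    LpNormV r s (fun I => ε I • x I) ≤ β * LpNormV r s x

/-- `B` is a block in `L` with top `I`: `B ⊆ L`, `I` is the unique maximal interval
of `B`, and `B` is order-convex in `L` between its elements and `I`. -/
def IsBlock (L : Set DyadicI) (B : Set DyadicI) (I : DyadicI) : Prop :=
  B ⊆ L ∧ I ∈ B ∧ (∀ J ∈ B, toSet J ⊆ toSet I) ∧
    ∀ J ∈ B, ∀ K ∈ L, toSet J ⊆ toSet K → toSet K ⊆ toSet I → K ∈ B

/-- `G₁(K | E)`: the maximal dyadic intervals of `E` strictly contained in `K`. -/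
def gen1 (K : DyadicI) (E : Set DyadicI) : Set DyadicI :=
  {J | J ∈ E ∧ toSet J ⊂ toSet K ∧
    ∀ J' ∈ E, toSet J' ⊂ toSet K → toSet J ⊆ toSet J' → J' = J}

end Defs

/-!
Let `F_I` be the value on `I` of the square function of `f` stopped at `I`. Replacing each
coefficient `x_I` by `F_I ^ (q / p - 1) • x_I` is an Abel summation along the dyadic intervals
containing a point, so it maps the unit ball of `H^q_X` to a bounded subset of `H^p_X`. The factor
`F_I ^ (1 - q / p)` removed in this way reappears after the rearrangement as a power of the maximal
function of the weights `F_I ^ q * |I| / |τ I|` on the intervals `τ I`. This maximal function is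
realized, up to constants, on a subfamily over which the weights at each point grow geometrically;
testing `T_{τ,p}` on that subfamily bounds its integral by a power strictly less than one of itself,
because `p < 2`, and hence by a power of the operator norm times `‖f‖_{H^q_X} ^ q`. Hölder's
inequality puts the two factors back together.
-/

section Rademacher

variable {ι X : Type*} [NormedAddCommGroup X] [NormedSpace ℝ X]

/-- The family `(∑_{i ∈ s} ε_i z_i)_ε` of all signed sums, with the `ℓ²` norm on the signs. -/
def signedSums (s : Finset ι) : (ι → X) →ₗ[ℝ] PiLp 2 fun _ : {i // i ∈ s} → Bool => X :=
  (WithLp.linearEquiv 2 ℝ (({i // i ∈ s} → Bool) → X)).symm.toLinearMap ∘ₗ LinearMap.pi fun ε =>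
    ∑ i ∈ s.attach, (if ε i then (1 : ℝ) else -1) • LinearMap.proj i.1

/-- The Rademacher average `z ↦ (E_ε ‖∑_{i ∈ s} ε_i z_i‖²)^{1/2}`, as a seminorm on families
indexed by all of `ι`. -/
def rademacherSeminorm (s : Finset ι) : Seminorm ℝ (ι → X) :=
  (NNReal.sqrt (2 ^ s.card))⁻¹ • (normSeminorm ℝ _).comp (signedSums s)

lemma rademacherSeminorm_apply (s : Finset ι) (z : ι → X) :
    rademacherSeminorm s z = √((∑ ε : {i // i ∈ s} → Bool,
      ‖∑ i ∈ s.attach, (if ε i then (1 : ℝ) else -1) • z i.1‖ ^ 2) / 2 ^ s.card) := by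
  rw [Real.sqrt_div' _ (by positivity), rademacherSeminorm, smul_apply,
    Seminorm.comp_apply, coe_normSeminorm, PiLp.norm_eq_of_L2, NNReal.smul_def, smul_eq_mul,
    div_eq_inv_mul]
  simp [signedSums, -ite_smul]

lemma rademacherSeminorm_congr {s : Finset ι} {z w : ι → X} (h : ∀ i ∈ s, z i = w i) :
    rademacherSeminorm s z = rademacherSeminorm s w := by
  simp only [rademacherSeminorm_apply]
  congr! 7 with ε _ i
  exact h i.1 i.2

lemma rademacherSeminorm_update_neg (s : Finset ι) (z : ι → X) (j : ι) :
    rademacherSeminorm s (Function.update z j (-z j)) = rademacherSeminorm s z := by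
  have flip_involutive : Function.Involutive fun (ε : {i // i ∈ s} → Bool) (i : {i // i ∈ s}) =>
      if i.1 = j then !(ε i) else ε i := fun ε => by
    funext i
    by_cases hi : i.1 = j <;> simp [hi]
  simp only [rademacherSeminorm_apply]
  congr 2
  refine Fintype.sum_equiv flip_involutive.toPerm _ _ fun ε => ?_
  congr! 3 with i
  by_cases hi : i.1 = j
  · cases hε : ε i <;> simp [hi, hε]
  · simp [hi]

lemma rademacherSeminorm_update_smul_le (s : Finset ι) (z : ι → X) (j : ι) {c : ℝ}
    (hc : |c| ≤ 1) :
    rademacherSeminorm s (Function.update z j (c • z j)) ≤ rademacherSeminorm s z := by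
  obtain ⟨hc₁, hc₂⟩ := abs_le.1 hc
  have convex_combination : Function.update z j (c • z j) =
      ((1 + c) / 2) • z + ((1 - c) / 2) • Function.update z j (-z j) := by
    ext i
    obtain rfl | hi := eq_or_ne i j
    · simp only [Function.update_self, Pi.add_apply, Pi.smul_apply]
      module
    · simp only [Function.update_of_ne hi, Pi.add_apply, Pi.smul_apply]
      module
  calc rademacherSeminorm s (Function.update z j (c • z j))
      ≤ rademacherSeminorm s (((1 + c) / 2) • z) +
          rademacherSeminorm s (((1 - c) / 2) • Function.update z j (-z j)) := by
        rw [convex_combination]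
        exact map_add_le_add _ _ _
    _ = rademacherSeminorm s z := by
        rw [map_smul_eq_mul, map_smul_eq_mul, rademacherSeminorm_update_neg,
          Real.norm_of_nonneg (by linarith), Real.norm_of_nonneg (by linarith)]
        ring

lemma rademacherSeminorm_smul_le {s : Finset ι} (z : ι → X) {c : ι → ℝ}
    (hc : ∀ i ∈ s, |c i| ≤ 1) :
    rademacherSeminorm s (fun i => c i • z i) ≤ rademacherSeminorm s z := by
  have scale_on : ∀ A ⊆ s,
      rademacherSeminorm s (A.piecewise (fun i => c i • z i) z) ≤ rademacherSeminorm s z := by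
    intro A
    induction A using Finset.induction_on with
    | empty => simp
    | insert j A hj ih =>
      intro hA
      rw [Finset.insert_subset_iff] at hA
      have hzj : c j • z j = c j • A.piecewise (fun i => c i • z i) z j := by
        rw [Finset.piecewise_eq_of_notMem _ _ _ hj]
      rw [Finset.piecewise_insert, hzj]
      exact (rademacherSeminorm_update_smul_le s _ j (hc j hA.1)).trans (ih hA.2)
  refine le_of_eq_of_le (rademacherSeminorm_congr fun i hi => ?_) (scale_on s subset_rfl)
  rw [Finset.piecewise_eq_of_mem _ _ _ hi]

lemma rademacherSeminorm_smul_le_smul {s : Finset ι} (z : ι → X) {c d : ι → ℝ}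
    (h : ∀ i ∈ s, |c i| ≤ |d i|) :
    rademacherSeminorm s (fun i => c i • z i) ≤ rademacherSeminorm s (fun i => d i • z i) := by
  have hdiv : ∀ i ∈ s, |c i / d i| ≤ 1 := fun i hi => by
    rw [abs_div]
    exact div_le_one_of_le₀ (h i hi) (abs_nonneg _)
  refine le_of_eq_of_le (rademacherSeminorm_congr fun i hi => ?_)
    (rademacherSeminorm_smul_le (fun i => d i • z i) hdiv)
  obtain hd | hd := eq_or_ne (d i) 0
  · have hci : c i = 0 := by simpa [hd] using h i hi
    simp [hci]
  · rw [smul_smul, div_mul_cancel₀ _ hd]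

lemma rademacherSeminorm_smul_le_mul {s : Finset ι} (z : ι → X) {c : ι → ℝ} {Λ : ℝ} (hΛ : 0 ≤ Λ)
    (hc : ∀ i ∈ s, |c i| ≤ Λ) :
    rademacherSeminorm s (fun i => c i • z i) ≤ Λ * rademacherSeminorm s z := by
  have h := rademacherSeminorm_smul_le_smul z (d := fun _ => Λ)
    (fun i hi => (hc i hi).trans (le_abs_self Λ))
  rwa [← Pi.smul_def, map_smul_eq_mul, Real.norm_of_nonneg hΛ] at h

lemma rademacherSeminorm_indicator_mono (s : Finset ι) (z : ι → X) {A B : Set ι} (h : A ⊆ B) :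
    rademacherSeminorm s (A.indicator z) ≤ rademacherSeminorm s (B.indicator z) := by
  have hA : A.indicator z = fun i => A.indicator (1 : ι → ℝ) i • B.indicator z i := by
    ext i
    by_cases hi : i ∈ A
    · simp [hi, h hi]
    · simp [hi]
  rw [hA]
  refine rademacherSeminorm_smul_le _ fun i _ => ?_
  by_cases hi : i ∈ A <;> simp [hi]

lemma sum_signs_mul_signs {κ : Type*} [Fintype κ] [DecidableEq κ] (i j : κ) :
    ∑ ε : κ → Bool, (if ε i then (1 : ℝ) else -1) * (if ε j then (1 : ℝ) else -1) =
      if i = j then 2 ^ Fintype.card κ else 0 := by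
  split_ifs with hij
  · subst hij
    have sign_mul_self (ε : κ → Bool) :
        (if ε i then (1 : ℝ) else -1) * (if ε i then (1 : ℝ) else -1) = 1 := by
      split_ifs <;> norm_num
    simp [sign_mul_self]
  · refine Finset.sum_ninvolution (fun ε => Function.update ε i (!ε i)) (fun ε => ?_)
      (fun ε _ h => ?_) (fun _ => Finset.mem_univ _) (fun ε => by simp)
    · rw [Function.update_self, Function.update_of_ne (Ne.symm hij)]
      cases ε i <;> cases ε j <;> simp
    · simpa using congrFun h i

lemma rademacherSeminorm_smul_const (s : Finset ι) (a : ι → ℝ) (e : X) :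
    rademacherSeminorm s (fun i => a i • e) = √(∑ i ∈ s, a i ^ 2) * ‖e‖ := by
  have expand_square (ε : {i // i ∈ s} → Bool) :
      ‖∑ i ∈ s.attach, (if ε i then (1 : ℝ) else -1) • a i.1 • e‖ ^ 2 =
        (∑ i : {i // i ∈ s}, ∑ j : {i // i ∈ s}, a i.1 * a j.1 *
          ((if ε i then (1 : ℝ) else -1) * (if ε j then (1 : ℝ) else -1))) * ‖e‖ ^ 2 := by
    simp only [smul_smul, ← Finset.sum_smul, norm_smul, mul_pow, Real.norm_eq_abs, sq_abs]
    rw [sq, ← Finset.univ_eq_attach, Finset.sum_mul_sum]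
    congr! 3
    ring
  have average_diagonal : ∑ ε : {i // i ∈ s} → Bool, ∑ i : {i // i ∈ s}, ∑ j : {i // i ∈ s},
      a i.1 * a j.1 * ((if ε i then (1 : ℝ) else -1) * (if ε j then (1 : ℝ) else -1)) =
        (∑ i ∈ s, a i ^ 2) * 2 ^ s.card := by
    rw [Finset.sum_comm, ← Finset.sum_coe_sort s, Finset.sum_mul]
    refine Finset.sum_congr rfl fun i _ => ?_
    rw [Finset.sum_comm]
    simp only [← Finset.mul_sum, sum_signs_mul_signs]
    simp [sq]
  rw [rademacherSeminorm_apply, Real.sqrt_eq_iff_mul_self_eq (by positivity) (by positivity),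
    ← sq, mul_pow, Real.sq_sqrt (by positivity), div_eq_iff (by positivity)]
  simp only [expand_square]
  rw [← Finset.sum_mul, average_diagonal]
  ring

lemma norm_le_rademacherSeminorm {s : Finset ι} (z : ι → X) {i : ι} (hi : i ∈ s) :
    ‖z i‖ ≤ rademacherSeminorm s z := by
  have hsingle : (fun j => (if j = i then (1 : ℝ) else 0) • z j) =
      fun j => (if j = i then (1 : ℝ) else 0) • z i := by
    ext j
    obtain rfl | hj := eq_or_ne j i
    · rfl
    · simp [hj]
  calc ‖z i‖ = rademacherSeminorm s fun j => (if j = i then (1 : ℝ) else 0) • z j := by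
        rw [hsingle, rademacherSeminorm_smul_const]
        simp [hi]
    _ ≤ rademacherSeminorm s z :=
        rademacherSeminorm_smul_le z fun j _ => by split_ifs <;> simp

end Rademacher

section AbelSummation

lemma rpow_le_rpow_add_mul_sub {θ u v : ℝ} (hθ₀ : 0 ≤ θ) (hθ₁ : θ ≤ 1) (hu : 0 ≤ u) (hv : 0 < v) :
    u ^ θ ≤ v ^ θ + θ * v ^ (θ - 1) * (u - v) := by
  have bernoulli : (1 + (u / v - 1)) ^ θ ≤ 1 + θ * (u / v - 1) :=
    rpow_one_add_le_one_add_mul_self (by linarith [div_nonneg hu hv.le]) hθ₀ hθ₁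
  rw [add_sub_cancel, Real.div_rpow hu hv.le, div_le_iff₀ (by positivity)] at bernoulli
  rw [Real.rpow_sub_one hv.ne']
  calc u ^ θ ≤ (1 + θ * (u / v - 1)) * v ^ θ := bernoulli
    _ = v ^ θ + θ * (v ^ θ / v) * (u - v) := by field_simp

lemma rpow_sub_one_mul_self {θ u : ℝ} (hθ : θ ≠ 0) (hu : 0 ≤ u) : u ^ (θ - 1) * u = u ^ θ := by
  nth_rw 2 [← Real.rpow_one u]
  rw [← Real.rpow_add' hu (by simpa using hθ), sub_add_cancel]

lemma abs_rpow_sub_one_sub_mul_le {θ u v : ℝ} (hθ₀ : 0 < θ) (hθ₁ : θ ≤ 1) (hu : 0 ≤ u)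
    (huv : u ≤ v) :
    |u ^ (θ - 1) - v ^ (θ - 1)| * u ≤ (θ⁻¹ - 1) * (v ^ θ - u ^ θ) := by
  obtain rfl | hu := hu.eq_or_lt
  · have hθ_inv : 1 ≤ θ⁻¹ := (one_le_inv₀ hθ₀).2 hθ₁
    rw [mul_zero, Real.zero_rpow hθ₀.ne', sub_zero]
    exact mul_nonneg (by linarith) (by positivity)
  · have hv : 0 < v := hu.trans_le huv
    have hanti : v ^ (θ - 1) ≤ u ^ (θ - 1) :=
      Real.rpow_le_rpow_of_nonpos hu huv (by linarith)
    have htangent := rpow_le_rpow_add_mul_sub hθ₀.le hθ₁ hu.le hv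
    rw [abs_of_nonneg (sub_nonneg.2 hanti), sub_mul, rpow_sub_one_mul_self hθ₀.ne' hu.le]
    rw [mul_sub, mul_assoc θ _ v, rpow_sub_one_mul_self hθ₀.ne' hv.le] at htangent
    field_simp
    linarith

variable {E : Type*} [AddCommGroup E] [Module ℝ E]

lemma seminorm_sum_smul_sub_sub_le (N : Seminorm ℝ E) {X : ℕ → E} (hX₀ : X 0 = 0)
    (hmono : Monotone fun n => N (X n)) {θ : ℝ} (hθ₀ : 0 < θ) (hθ₁ : θ ≤ 1) (n : ℕ) :
    N (∑ i ∈ Finset.range n, N (X (i + 1)) ^ (θ - 1) • (X (i + 1) - X i) -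
      N (X n) ^ (θ - 1) • X n) ≤ (θ⁻¹ - 1) * N (X n) ^ θ := by
  induction n with
  | zero => simp [hX₀, Real.zero_rpow hθ₀.ne']
  | succ n ih =>
    set S := ∑ i ∈ Finset.range n, N (X (i + 1)) ^ (θ - 1) • (X (i + 1) - X i)
    set a := fun n => N (X n) ^ (θ - 1)
    have habel : S + a (n + 1) • (X (n + 1) - X n) - a (n + 1) • X (n + 1) =
        (S - a n • X n) + (a n - a (n + 1)) • X n := by module
    have hjump : |a n - a (n + 1)| * N (X n) ≤
        (θ⁻¹ - 1) * (N (X (n + 1)) ^ θ - N (X n) ^ θ) :=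
      abs_rpow_sub_one_sub_mul_le hθ₀ hθ₁ (apply_nonneg N _) (hmono n.le_succ)
    rw [Finset.sum_range_succ, habel]
    calc N ((S - a n • X n) + (a n - a (n + 1)) • X n)
        ≤ N (S - a n • X n) + |a n - a (n + 1)| * N (X n) := by
          grw [map_add_le_add, map_smul_eq_mul, Real.norm_eq_abs]
      _ ≤ (θ⁻¹ - 1) * N (X n) ^ θ + (θ⁻¹ - 1) * (N (X (n + 1)) ^ θ - N (X n) ^ θ) := by
          gcongr
      _ = (θ⁻¹ - 1) * N (X (n + 1)) ^ θ := by ring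

lemma seminorm_sum_rpow_smul_sub_le (N : Seminorm ℝ E) {X : ℕ → E} (hX₀ : X 0 = 0)
    (hmono : Monotone fun n => N (X n)) {θ : ℝ} (hθ₀ : 0 < θ) (hθ₁ : θ ≤ 1) (n : ℕ) :
    N (∑ i ∈ Finset.range n, N (X (i + 1)) ^ (θ - 1) • (X (i + 1) - X i)) ≤
      θ⁻¹ * N (X n) ^ θ := by
  set S := ∑ i ∈ Finset.range n, N (X (i + 1)) ^ (θ - 1) • (X (i + 1) - X i)
  have hlast : N (N (X n) ^ (θ - 1) • X n) = N (X n) ^ θ := by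
    rw [map_smul_eq_mul, Real.norm_of_nonneg (Real.rpow_nonneg (apply_nonneg N _) _),
      rpow_sub_one_mul_self hθ₀.ne' (apply_nonneg N _)]
  calc N S = N ((S - N (X n) ^ (θ - 1) • X n) + N (X n) ^ (θ - 1) • X n) := by
        rw [sub_add_cancel]
    _ ≤ (θ⁻¹ - 1) * N (X n) ^ θ + N (X n) ^ θ := by
        grw [map_add_le_add, hlast, seminorm_sum_smul_sub_sub_le N hX₀ hmono hθ₀ hθ₁ n]
    _ = θ⁻¹ * N (X n) ^ θ := by ring

end AbelSummation

section DyadicIntervals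

namespace DyadicI

lemma len_pos (I : DyadicI) : 0 < I.len := by
  unfold len
  positivity

lemma len_eq_inv (I : DyadicI) : I.len = (2 ^ I.n)⁻¹ := by
  rw [len, zpow_neg, zpow_natCast]

lemma mem_toSet_iff_floor {I : DyadicI} {t : ℝ} : t ∈ toSet I ↔ ⌊t * 2 ^ I.n⌋ = I.k := by
  have hpow : (0 : ℝ) < 2 ^ I.n := by positivity
  rw [Int.floor_eq_iff, toSet, lep, len_eq_inv, ← add_one_mul, Set.mem_Ico, ← div_eq_mul_inv,
    ← div_eq_mul_inv, div_le_iff₀ hpow, lt_div_iff₀ hpow, Int.cast_natCast]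

lemma eq_of_mem_toSet {I J : DyadicI} {t : ℝ} (hn : I.n = J.n) (hI : t ∈ toSet I)
    (hJ : t ∈ toSet J) : I = J := by
  rw [mem_toSet_iff_floor] at hI hJ
  have hk : I.k = J.k := by
    rw [hn, hJ] at hI
    exact_mod_cast hI.symm
  cases I
  cases J
  simp_all

/-- The index on the right does not involve `t`: a coarser interval contains all or none of `I`. -/
lemma mem_toSet_iff_of_le {I K : DyadicI} {t : ℝ} (ht : t ∈ toSet I) (hn : K.n ≤ I.n) :
    t ∈ toSet K ↔ I.k / 2 ^ (I.n - K.n) = K.k := by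
  have hscale : t * 2 ^ K.n = t * 2 ^ I.n / ((2 ^ (I.n - K.n) : ℕ) : ℝ) := by
    rw [eq_div_iff (by positivity), mul_assoc, Nat.cast_pow, Nat.cast_ofNat, ← pow_add,
      Nat.add_sub_cancel' hn]
  rw [mem_toSet_iff_floor, hscale, Int.floor_div_natCast, mem_toSet_iff_floor.1 ht]
  norm_cast

lemma toSet_subset_iff {I K : DyadicI} {t : ℝ} (ht : t ∈ toSet I) :
    toSet I ⊆ toSet K ↔ t ∈ toSet K ∧ K.n ≤ I.n := by
  refine ⟨fun h => ⟨h ht, ?_⟩, fun ⟨htK, hn⟩ u hu => ?_⟩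
  · obtain ⟨hleft, hright⟩ :=
      (Set.Ico_subset_Ico_iff (lt_add_of_pos_right I.lep I.len_pos)).1 h
    have hlen : I.len ≤ K.len := by linarith
    rwa [len_eq_inv, len_eq_inv, inv_le_inv₀ (by positivity) (by positivity),
      pow_le_pow_iff_right₀ one_lt_two] at hlen
  · rw [mem_toSet_iff_of_le ht hn] at htK
    rwa [mem_toSet_iff_of_le hu hn]

lemma measurableSet_toSet (I : DyadicI) : MeasurableSet (toSet I) := measurableSet_Ico

lemma toSet_subset_Icc (I : DyadicI) : toSet I ⊆ Set.Icc 0 1 := by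
  have hk : (I.k : ℝ) + 1 ≤ 2 ^ I.n := by exact_mod_cast I.hk
  refine (Set.Ico_subset_Icc_self).trans (Set.Icc_subset_Icc ?_ ?_)
  · exact mul_nonneg (Nat.cast_nonneg _) I.len_pos.le
  · rw [lep, ← add_one_mul, len_eq_inv, ← div_eq_mul_inv]
    exact div_le_one_of_le₀ hk (by positivity)

lemma restrict_volume_toSet (I : DyadicI) :
    volume.restrict (Set.Icc 0 1) (toSet I) = ENNReal.ofReal I.len := by
  rw [Measure.restrict_apply I.measurableSet_toSet,
    Set.inter_eq_left.2 I.toSet_subset_Icc, toSet, Real.volume_Ico, add_sub_cancel_left]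

lemma abs_haar (I : DyadicI) (t : ℝ) : |haar I t| = (toSet I).indicator 1 t := by
  have hunion : toSet I =
      Set.Ico I.lep (I.lep + I.len / 2) ∪ Set.Ico (I.lep + I.len / 2) (I.lep + I.len) :=
    (Set.Ico_union_Ico_eq_Ico (by linarith [I.len_pos]) (by linarith [I.len_pos])).symm
  simp only [haar, Set.indicator_apply, hunion, Set.mem_union]
  split_ifs <;> first | tauto | simp

lemma measurable_haar (I : DyadicI) : Measurable (haar I) :=
  measurable_const.ite measurableSet_Ico (measurable_const.ite measurableSet_Ico measurable_const)

end DyadicI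

end DyadicIntervals

section SquareFunction

variable {X : Type*} [NormedAddCommGroup X] [NormedSpace ℝ X]

lemma sqFn_eq_rademacherSeminorm_haar (s : Finset DyadicI) (x : DyadicI → X) (t : ℝ) :
    sqFn s x t = rademacherSeminorm s fun I => haar I t • x I := by
  simp only [sqFn, rademacherSeminorm_apply, mul_smul]

lemma sqFn_eq_rademacherSeminorm_indicator (s : Finset DyadicI) (x : DyadicI → X) (t : ℝ) :
    sqFn s x t = rademacherSeminorm s ({I | t ∈ toSet I}.indicator x) := by
  have hindicator : {I | t ∈ toSet I}.indicator x =
      fun I => (toSet I).indicator (1 : ℝ → ℝ) t • x I := by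
    ext I
    by_cases ht : t ∈ toSet I <;> simp [ht]
  have habs (I : DyadicI) : |haar I t| = |(toSet I).indicator (1 : ℝ → ℝ) t| := by
    rw [← abs_haar, abs_abs]
  rw [sqFn_eq_rademacherSeminorm_haar, hindicator]
  exact le_antisymm (rademacherSeminorm_smul_le_smul x fun I _ => (habs I).le)
    (rademacherSeminorm_smul_le_smul x fun I _ => (habs I).ge)

lemma sqFn_nonneg (s : Finset DyadicI) (x : DyadicI → X) (t : ℝ) : 0 ≤ sqFn s x t :=
  Real.sqrt_nonneg _

lemma sqFn_smul (s : Finset DyadicI) (c : ℝ) (x : DyadicI → X) (t : ℝ) :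
    sqFn s (c • x) t = |c| * sqFn s x t := by
  have hindicator : {I | t ∈ toSet I}.indicator (c • x) = c • {I | t ∈ toSet I}.indicator x :=
    Set.indicator_const_smul _ c x
  rw [sqFn_eq_rademacherSeminorm_indicator, hindicator, map_smul_eq_mul, Real.norm_eq_abs,
    sqFn_eq_rademacherSeminorm_indicator]

lemma sqFn_le_rademacherSeminorm (s : Finset DyadicI) (x : DyadicI → X) (t : ℝ) :
    sqFn s x t ≤ rademacherSeminorm s x := by
  rw [sqFn_eq_rademacherSeminorm_indicator, ← Set.indicator_univ x, Set.indicator_indicator,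
    Set.inter_univ]
  exact rademacherSeminorm_indicator_mono s x (Set.subset_univ _)

lemma measurable_sqFn (s : Finset DyadicI) (x : DyadicI → X) : Measurable (sqFn s x) := by
  have hterm (ε : {I // I ∈ s} → Bool) : StronglyMeasurable fun t =>
      ∑ I ∈ s.attach, ((if ε I then (1 : ℝ) else -1) * haar I.1 t) • x I.1 :=
    Finset.stronglyMeasurable_fun_sum _ fun I _ =>
      ((measurable_haar I.1).const_mul _).stronglyMeasurable.smul_const _
  exact ((Finset.measurable_fun_sum _ fun ε _ =>
    (hterm ε).norm.measurable.pow_const 2).div_const _).sqrt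

lemma norm_le_sqFn {s : Finset DyadicI} (x : DyadicI → X) {I : DyadicI} (hI : I ∈ s) {t : ℝ}
    (ht : t ∈ toSet I) : ‖x I‖ ≤ sqFn s x t := by
  rw [sqFn_eq_rademacherSeminorm_indicator]
  simpa [ht] using norm_le_rademacherSeminorm ({K | t ∈ toSet K}.indicator x) hI

/-- The value on `I` of the square function of `f = ∑_{K ∈ s} x_K h_K` stopped at `I`, i.e. of the
square function of `∑_{K ⊇ I} x_K h_K`, which is constant on `I`. -/
def stoppedSqFn (s : Finset DyadicI) (x : DyadicI → X) (I : DyadicI) : ℝ :=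
  rademacherSeminorm s ({K | toSet I ⊆ toSet K}.indicator x)

lemma stoppedSqFn_nonneg (s : Finset DyadicI) (x : DyadicI → X) (I : DyadicI) :
    0 ≤ stoppedSqFn s x I :=
  apply_nonneg _ _

lemma stoppedSqFn_le_sqFn (s : Finset DyadicI) (x : DyadicI → X) {I : DyadicI} {t : ℝ}
    (ht : t ∈ toSet I) : stoppedSqFn s x I ≤ sqFn s x t := by
  rw [sqFn_eq_rademacherSeminorm_indicator]
  exact rademacherSeminorm_indicator_mono s x fun _ hIK => hIK ht

lemma eq_zero_of_stoppedSqFn_eq_zero {s : Finset DyadicI} {x : DyadicI → X} {I : DyadicI}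
    (hI : I ∈ s) (h : stoppedSqFn s x I = 0) : x I = 0 := by
  have hle : ‖x I‖ ≤ stoppedSqFn s x I := by
    simpa [stoppedSqFn] using norm_le_rademacherSeminorm ({K | toSet I ⊆ toSet K}.indicator x) hI
  exact norm_le_zero_iff.1 (hle.trans_eq h)

/-- Normalizing the coefficients by powers of the stopped square function, read along the dyadic
intervals containing `t` in order of decreasing length, is an Abel summation. -/
lemma sqFn_stoppedSqFn_rpow_smul_le (s : Finset DyadicI) (x : DyadicI → X) {θ : ℝ} (hθ₀ : 0 < θ)
    (hθ₁ : θ ≤ 1) (t : ℝ) :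
    sqFn s (fun I => stoppedSqFn s x I ^ (θ - 1) • x I) t ≤ θ⁻¹ * sqFn s x t ^ θ := by
  let N : Seminorm ℝ (DyadicI → X) := rademacherSeminorm s
  let truncation (n : ℕ) : DyadicI → X := {I | t ∈ toSet I ∧ I.n < n}.indicator x
  have hmono : Monotone fun n => N (truncation n) := fun m n hmn =>
    rademacherSeminorm_indicator_mono s x fun I hI => ⟨hI.1, hI.2.trans_le hmn⟩
  have hzero : truncation 0 = 0 := by ext I; simp [truncation]
  have hstopped {I : DyadicI} (hI : t ∈ toSet I) :
      stoppedSqFn s x I = N (truncation (I.n + 1)) := by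
    simp only [stoppedSqFn, toSet_subset_iff hI, Nat.lt_succ_iff, N, truncation]
  have hjump (n : ℕ) : truncation (n + 1) - truncation n =
      {I | t ∈ toSet I ∧ I.n = n}.indicator x := by
    ext I
    simp only [truncation, Pi.sub_apply, Set.indicator_apply, Set.mem_ofPred_eq]
    grind
  obtain ⟨m, hm⟩ : ∃ m, ∀ I ∈ s, I.n < m :=
    ⟨s.sup (·.n) + 1, fun I hI => Nat.lt_succ_of_le (Finset.le_sup (f := (·.n)) hI)⟩
  have hsum : sqFn s (fun I => stoppedSqFn s x I ^ (θ - 1) • x I) t = N (∑ n ∈ Finset.range m,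
      N (truncation (n + 1)) ^ (θ - 1) • (truncation (n + 1) - truncation n)) := by
    rw [sqFn_eq_rademacherSeminorm_indicator]
    refine rademacherSeminorm_congr fun I hI => ?_
    by_cases ht : t ∈ toSet I
    · simp [hjump, Finset.sum_apply, Set.indicator_apply, ht, hstopped, hm I hI]
    · simp [hjump, Finset.sum_apply, ht]
  have hlast : sqFn s x t = N (truncation m) := by
    rw [sqFn_eq_rademacherSeminorm_indicator]
    refine rademacherSeminorm_congr fun I hI => ?_
    by_cases ht : t ∈ toSet I <;> simp [truncation, ht, hm I hI]
  rw [hsum, hlast]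
  exact seminorm_sum_rpow_smul_sub_le N hzero hmono hθ₀ hθ₁ m

end SquareFunction

section HardyNorm

variable {X : Type*} [NormedAddCommGroup X] [NormedSpace ℝ X]

/-- The `p`-th power `∫₀¹ 𝕊(f)^p` of the `H^p_X` quasi-norm, as a Lebesgue integral. -/
def hpIntegral (p : ℝ) (s : Finset DyadicI) (x : DyadicI → X) : ℝ≥0∞ :=
  ∫⁻ t in Set.Icc (0 : ℝ) 1, ENNReal.ofReal (sqFn s x t) ^ p

lemma measurable_ofReal_sqFn_rpow (s : Finset DyadicI) (x : DyadicI → X) (p : ℝ) :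
    Measurable fun t => ENNReal.ofReal (sqFn s x t) ^ p :=
  (measurable_sqFn s x).ennreal_ofReal.pow_const p

lemma hpIntegral_ne_top {p : ℝ} (hp : 0 ≤ p) (s : Finset DyadicI) (x : DyadicI → X) :
    hpIntegral p s x ≠ ⊤ := by
  have hle : hpIntegral p s x ≤
      ∫⁻ _ in Set.Icc (0 : ℝ) 1, ENNReal.ofReal (rademacherSeminorm s x) ^ p := by
    unfold hpIntegral
    gcongr with t
    exact sqFn_le_rademacherSeminorm s x t
  refine ne_top_of_le_ne_top ?_ hle
  rw [setLIntegral_const, Real.volume_Icc]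
  exact ENNReal.mul_ne_top (ENNReal.rpow_ne_top_of_nonneg hp ENNReal.ofReal_ne_top)
    ENNReal.ofReal_ne_top

lemma ofReal_HpNormV {p : ℝ} (hp : 0 < p) (s : Finset DyadicI) (x : DyadicI → X) :
    ENNReal.ofReal (HpNormV p s x) = hpIntegral p s x ^ (1 / p) := by
  have hintegral : ∫ t in Set.Icc (0 : ℝ) 1, sqFn s x t ^ p = (hpIntegral p s x).toReal := by
    rw [integral_eq_lintegral_of_nonneg_ae
      (ae_of_all _ fun t => Real.rpow_nonneg (sqFn_nonneg s x t) p)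
      ((measurable_sqFn s x).pow_const p).aestronglyMeasurable]
    simp only [hpIntegral, ENNReal.ofReal_rpow_of_nonneg (sqFn_nonneg s x _) hp.le]
  rw [HpNormV, hintegral, ← ENNReal.ofReal_rpow_of_nonneg ENNReal.toReal_nonneg (by positivity),
    ENNReal.ofReal_toReal (hpIntegral_ne_top hp.le s x)]

lemma hpIntegral_smul {p : ℝ} (hp : 0 ≤ p) (s : Finset DyadicI) (c : ℝ) (x : DyadicI → X) :
    hpIntegral p s (c • x) = ENNReal.ofReal |c| ^ p * hpIntegral p s x := by
  simp only [hpIntegral, sqFn_smul, ENNReal.ofReal_mul (abs_nonneg c),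
    ENNReal.mul_rpow_of_nonneg _ _ hp]
  exact lintegral_const_mul _ (measurable_ofReal_sqFn_rpow s x p)

lemma rearrCoef_smul (τ : DyadicI → DyadicI) (p : ℝ) (s : Finset DyadicI) (c : ℝ)
    (x : DyadicI → X) : rearrCoef τ p s (c • x) = c • rearrCoef τ p s x := by
  ext J
  simp only [rearrCoef, Pi.smul_apply, Finset.smul_sum, smul_ite, smul_zero]
  congr! 2
  exact smul_comm _ _ _

lemma rearrCoef_apply {τ : DyadicI → DyadicI} (hτ : Function.Injective τ) (p : ℝ)
    {s : Finset DyadicI} (x : DyadicI → X) {I : DyadicI} (hI : I ∈ s) :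
    rearrCoef τ p s x (τ I) = (len I / len (τ I)) ^ (1 / p) • x I := by
  simp [rearrCoef, hτ.eq_iff, hI]

lemma hpOpNorm_le_iff {p : ℝ} (hp : 0 < p) {τ : DyadicI → DyadicI} {C : ℝ≥0∞} :
    hpOpNorm τ p X ≤ C ↔ ∀ (s : Finset DyadicI) (x : DyadicI → X), hpIntegral p s x ≤ 1 →
      hpIntegral p (s.image τ) (rearrCoef τ p s x) ≤ C ^ p := by
  have hball (s : Finset DyadicI) (x : DyadicI → X) :
      HpNormV p s x ≤ 1 ↔ hpIntegral p s x ≤ 1 := by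
    rw [← ENNReal.ofReal_le_one, ofReal_HpNormV hp, one_div, ENNReal.rpow_inv_le_iff hp,
      ENNReal.one_rpow]
  simp only [hpOpNorm, iSup_le_iff, hball, ofReal_HpNormV hp, one_div, ENNReal.rpow_inv_le_iff hp]

lemma hpOpNorm_eq_zero_of_subsingleton [Subsingleton X] {p : ℝ} (hp : 0 < p)
    {τ : DyadicI → DyadicI} : hpOpNorm τ p X = 0 := by
  refine nonpos_iff_eq_zero.1 ((hpOpNorm_le_iff hp).2 fun s x _ => ?_)
  rw [Subsingleton.elim (rearrCoef τ p s x) ((0 : ℝ) • x), hpIntegral_smul hp.le, abs_zero,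
    ENNReal.ofReal_zero, ENNReal.zero_rpow_of_pos hp, zero_mul]

lemma hpIntegral_rearrCoef_le {p : ℝ} (hp : 0 < p) {τ : DyadicI → DyadicI}
    (hK : hpOpNorm τ p X ≠ ⊤) (s : Finset DyadicI) (x : DyadicI → X) :
    hpIntegral p (s.image τ) (rearrCoef τ p s x) ≤ hpOpNorm τ p X ^ p * hpIntegral p s x := by
  have normalize (a : ℝ≥0∞) (ha : a ∈ Set.Ioo (hpIntegral p s x) ⊤) :
      hpIntegral p (s.image τ) (rearrCoef τ p s x) ≤ hpOpNorm τ p X ^ p * a := by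
    have ha₀ : a ≠ 0 := (bot_le.trans_lt ha.1).ne'
    let c : ℝ := (a ^ (-p⁻¹)).toReal
    have hc : ENNReal.ofReal |c| ^ p = a⁻¹ := by
      rw [abs_of_nonneg ENNReal.toReal_nonneg, ENNReal.ofReal_toReal
        (ENNReal.rpow_ne_top_of_ne_zero ha₀ ha.2.ne), ← ENNReal.rpow_mul, neg_mul,
        inv_mul_cancel₀ hp.ne', ENNReal.rpow_neg_one]
    have hunit : hpIntegral p s (c • x) ≤ 1 := by
      rw [hpIntegral_smul hp.le, hc, mul_comm, ← div_eq_mul_inv]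
      exact ENNReal.div_le_of_le_mul (by simpa using ha.1.le)
    have himage :=
      (hpOpNorm_le_iff (τ := τ) (X := X) hp).1 (le_refl (hpOpNorm τ p X)) s (c • x) hunit
    rwa [rearrCoef_smul, hpIntegral_smul hp.le, hc, mul_comm, ← div_eq_mul_inv,
      ENNReal.div_le_iff ha₀ ha.2.ne] at himage
  have hlimit : Filter.Tendsto (fun a => hpOpNorm τ p X ^ p * a)
      (nhdsWithin (hpIntegral p s x) (Set.Ioi (hpIntegral p s x)))
      (nhds (hpOpNorm τ p X ^ p * hpIntegral p s x)) :=
    ENNReal.Tendsto.const_mul (Filter.tendsto_id.mono_left nhdsWithin_le_nhds)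
      (Or.inr (ENNReal.rpow_ne_top_of_nonneg hp.le hK))
  have hlt : hpIntegral p s x < ⊤ := (hpIntegral_ne_top hp.le s x).lt_top
  have := nhdsGT_neBot_of_exists_gt ⟨_, hlt⟩
  exact ge_of_tendsto hlimit (Filter.mem_of_superset (Ioo_mem_nhdsGT hlt) normalize)

end HardyNorm

section SparseSubfamilies

variable {ι : Type*}

lemma sum_two_zpow_le {A : Finset ι} {e : ι → ℤ} (he : Set.InjOn e A) {n : ℤ}
    (hn : ∀ i ∈ A, e i ≤ n) : ∑ i ∈ A, (2 : ℝ) ^ e i ≤ 2 * 2 ^ n := by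
  induction A using Finset.induction_on_max_value e generalizing n with
  | empty => simpa using by positivity
  | insert a A ha hmax ih =>
    have hlt : ∀ i ∈ A, e i ≤ e a - 1 := fun i hi => Int.le_sub_one_of_lt <|
      (hmax i hi).lt_of_ne fun h => ha <|
        he (Finset.mem_insert_of_mem hi) (Finset.mem_insert_self a A) h ▸ hi
    have hA := ih (he.mono (Finset.coe_subset.2 (Finset.subset_insert a A))) hlt
    have ha_le : (2 : ℝ) ^ e a ≤ 2 ^ n :=
      zpow_le_zpow_right₀ one_le_two (hn a (Finset.mem_insert_self a A))
    rw [zpow_sub_one₀ two_ne_zero] at hA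
    rw [Finset.sum_insert ha]
    linarith

lemma exists_subset_covering_injOn {σ : ι → DyadicI} (hσ : Function.Injective σ) (e : ι → ℤ)
    (s : Finset ι) : ∃ R ⊆ s,
      (∀ i ∈ s, ∀ t ∈ toSet (σ i), ∃ j ∈ R, t ∈ toSet (σ j) ∧ e i ≤ e j) ∧
      ∀ t, Set.InjOn e {i ∈ R | t ∈ toSet (σ i)} := by
  let IsRecord (i : ι) : Prop :=
    ∀ j ∈ s, j ≠ i → toSet (σ i) ⊆ toSet (σ j) → e j < e i
  refine ⟨s.filter IsRecord, Finset.filter_subset _ _, fun i hi t ht => ?_, fun t => ?_⟩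
  · obtain ⟨j, hj, hmin⟩ := Finset.exists_min_image
      (s.filter fun j => t ∈ toSet (σ j) ∧ e i ≤ e j) (fun j => (σ j).n) ⟨i, by simp [hi, ht]⟩
    simp only [Finset.mem_filter] at hj hmin
    obtain ⟨hjs, htj, hij⟩ := hj
    refine ⟨j, Finset.mem_filter.2 ⟨hjs, fun k hk hkj hsub => ?_⟩, htj, hij⟩
    by_contra! hle
    obtain ⟨htk, hkn⟩ := (toSet_subset_iff htj).1 hsub
    have hjn : (σ j).n ≤ (σ k).n := hmin k ⟨hk, htk, hij.trans hle⟩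
    exact hkj (hσ (eq_of_mem_toSet (hkn.antisymm hjn) htk htj))
  · have eq_of_finer {i j : ι} (hi : IsRecord i) (hj : j ∈ s) (hti : t ∈ toSet (σ i))
        (htj : t ∈ toSet (σ j)) (hn : (σ j).n ≤ (σ i).n) (he : e i = e j) : i = j := by
      by_contra hij
      exact (hi j hj (Ne.symm hij) ((toSet_subset_iff hti).2 ⟨htj, hn⟩)).ne he.symm
    rintro i ⟨hiR, hti⟩ j ⟨hjR, htj⟩ he
    obtain ⟨his, hi⟩ := Finset.mem_filter.1 hiR
    obtain ⟨hjs, hj⟩ := Finset.mem_filter.1 hjR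
    rcases le_total (σ j).n (σ i).n with hn | hn
    · exact eq_of_finer hi hjs hti htj hn he
    · exact (eq_of_finer hj his htj hti hn he.symm).symm

lemma exists_sparse_subset {σ : ι → DyadicI} (hσ : Function.Injective σ) (m : ι → ℝ)
    {s : Finset ι} (hm : ∀ i ∈ s, 0 < m i) : ∃ R ⊆ s,
      (∀ i ∈ s, ∀ t ∈ toSet (σ i), ∃ j ∈ R, t ∈ toSet (σ j) ∧ m i ≤ 2 * m j) ∧
      ∀ j ∈ R, ∀ t ∈ toSet (σ j), ∃ k ∈ R, t ∈ toSet (σ k) ∧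
        ∑ i ∈ R with t ∈ toSet (σ i), m i ≤ 4 * m k := by
  let e (i : ι) : ℤ := Int.log 2 (m i)
  have lower {i : ι} (hi : i ∈ s) : (2 : ℝ) ^ e i ≤ m i :=
    mod_cast Int.zpow_log_le_self one_lt_two (hm i hi)
  have upper (i : ι) : m i ≤ 2 * 2 ^ e i := by
    have h := Int.lt_zpow_succ_log_self one_lt_two (m i)
    rw [Nat.cast_ofNat, zpow_add_one₀ two_ne_zero, mul_comm] at h
    exact h.le
  obtain ⟨R, hRs, hcover, hinj⟩ := exists_subset_covering_injOn hσ e s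
  refine ⟨R, hRs, fun i hi t ht => ?_, fun j hj t htj => ?_⟩
  · obtain ⟨j, hj, htj, hij⟩ := hcover i hi t ht
    refine ⟨j, hj, htj, (upper i).trans ?_⟩
    have hpow : (2 : ℝ) ^ e i ≤ 2 ^ e j := zpow_le_zpow_right₀ one_le_two hij
    linarith [lower (hRs hj)]
  · obtain ⟨k, hk, hmax⟩ := Finset.exists_max_image (R.filter fun i => t ∈ toSet (σ i)) e
      ⟨j, Finset.mem_filter.2 ⟨hj, htj⟩⟩
    obtain ⟨hkR, htk⟩ := Finset.mem_filter.1 hk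
    refine ⟨k, hkR, htk, ?_⟩
    have hinj_t : Set.InjOn e (R.filter fun i => t ∈ toSet (σ i)) := by
      simpa only [Finset.coe_filter] using hinj t
    calc ∑ i ∈ R with t ∈ toSet (σ i), m i
        ≤ ∑ i ∈ R with t ∈ toSet (σ i), 2 * 2 ^ e i := Finset.sum_le_sum fun i _ => upper i
      _ = 2 * ∑ i ∈ R with t ∈ toSet (σ i), 2 ^ e i := by rw [Finset.mul_sum]
      _ ≤ 2 * (2 * 2 ^ e k) := by gcongr; exact sum_two_zpow_le hinj_t hmax
      _ ≤ 4 * m k := by linarith [lower (hRs hkR)]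

end SparseSubfamilies

section MaximalBound

variable {X : Type*} [NormedAddCommGroup X] [NormedSpace ℝ X]

lemma lintegral_sum_indicator_toSet {ι : Type*} (R : Finset ι) (σ : ι → DyadicI) (m : ι → ℝ≥0∞) :
    ∫⁻ t in Set.Icc (0 : ℝ) 1, ∑ i ∈ R, (toSet (σ i)).indicator (fun _ => m i) t =
      ∑ i ∈ R, m i * ENNReal.ofReal (len (σ i)) := by
  rw [lintegral_finsetSum _ fun i _ => measurable_const.indicator (measurableSet_toSet (σ i))]
  simp only [lintegral_indicator_const (measurableSet_toSet _), restrict_volume_toSet]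

lemma sqFn_rpow_smul_const (s : Finset DyadicI) {v : DyadicI → ℝ} (hv : ∀ I, 0 ≤ v I) (r : ℝ)
    (e : X) (t : ℝ) :
    sqFn s (fun I => v I ^ r • e) t = √(∑ I ∈ s with t ∈ toSet I, v I ^ (r * 2)) * ‖e‖ := by
  have hindicator : {I | t ∈ toSet I}.indicator (fun I => v I ^ r • e) =
      fun I => {I | t ∈ toSet I}.indicator (fun I => v I ^ r) I • e := by
    ext I
    by_cases ht : t ∈ toSet I <;> simp [ht]
  have hsquare (I : DyadicI) : {I | t ∈ toSet I}.indicator (fun I => v I ^ r) I ^ 2 =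
      if t ∈ toSet I then v I ^ (r * 2) else 0 := by
    by_cases ht : t ∈ toSet I
    · simp [ht, Real.rpow_mul (hv I)]
    · simp [ht]
  rw [sqFn_eq_rademacherSeminorm_indicator, hindicator, rademacherSeminorm_smul_const,
    Finset.sum_filter]
  simp only [hsquare]

lemma ofReal_sqFn_rpow_smul_const_le {p : ℝ} (hp₀ : 0 < p) (hp₂ : p ≤ 2) {R : Finset DyadicI}
    {v : DyadicI → ℝ} (hv : ∀ I, 0 ≤ v I) {e : X} (he : ‖e‖ = 1) {t : ℝ} {b : ℝ≥0∞}
    (hb : ∀ I ∈ R, t ∈ toSet I → ENNReal.ofReal (v I) ≤ b) :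
    ENNReal.ofReal (sqFn R (fun I => v I ^ (1 / p) • e) t) ^ p ≤
      (∑ I ∈ R, (toSet I).indicator (fun _ => ENNReal.ofReal (v I)) t) ^ (p / 2) *
        b ^ (1 - p / 2) := by
  have hexp : 0 ≤ 2 / p - 1 := by rw [sub_nonneg, one_le_div hp₀]; exact hp₂
  have hterm : ∀ I ∈ R.filter (t ∈ toSet ·), ENNReal.ofReal (v I ^ (1 / p * 2)) ≤
      ENNReal.ofReal (v I) * b ^ (2 / p - 1) := fun I hI => by
    obtain ⟨hIR, ht⟩ := Finset.mem_filter.1 hI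
    calc ENNReal.ofReal (v I ^ (1 / p * 2)) = ENNReal.ofReal (v I) ^ (1 + (2 / p - 1)) := by
          rw [ENNReal.ofReal_rpow_of_nonneg (hv I) (by linarith)]; ring_nf
      _ = ENNReal.ofReal (v I) * ENNReal.ofReal (v I) ^ (2 / p - 1) := by
          rw [ENNReal.rpow_add_of_nonneg _ _ zero_le_one hexp, ENNReal.rpow_one]
      _ ≤ ENNReal.ofReal (v I) * b ^ (2 / p - 1) := by gcongr; exact hb I hIR ht
  have hsum : ENNReal.ofReal (∑ I ∈ R with t ∈ toSet I, v I ^ (1 / p * 2)) ≤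
      (∑ I ∈ R, (toSet I).indicator (fun _ => ENNReal.ofReal (v I)) t) * b ^ (2 / p - 1) := by
    simp only [Set.indicator_apply]
    rw [ENNReal.ofReal_sum_of_nonneg fun I _ => Real.rpow_nonneg (hv I) _, ← Finset.sum_filter,
      Finset.sum_mul]
    exact Finset.sum_le_sum hterm
  calc ENNReal.ofReal (sqFn R (fun I => v I ^ (1 / p) • e) t) ^ p
      = ENNReal.ofReal (∑ I ∈ R with t ∈ toSet I, v I ^ (1 / p * 2)) ^ (p / 2) := by
        rw [sqFn_rpow_smul_const R hv, he, mul_one, Real.sqrt_eq_rpow,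
          ← ENNReal.ofReal_rpow_of_nonneg (Finset.sum_nonneg fun I _ => Real.rpow_nonneg (hv I) _)
            one_half_pos.le, ← ENNReal.rpow_mul]
        ring_nf
    _ ≤ ((∑ I ∈ R, (toSet I).indicator (fun _ => ENNReal.ofReal (v I)) t) *
          b ^ (2 / p - 1)) ^ (p / 2) := by gcongr
    _ = _ := by
        rw [ENNReal.mul_rpow_of_nonneg _ _ (by positivity), ← ENNReal.rpow_mul]
        congr 2
        field_simp

lemma hpIntegral_rpow_smul_const_le {p : ℝ} (hp₀ : 0 < p) (hp₂ : p ≤ 2) {R : Finset DyadicI}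
    {v : DyadicI → ℝ} (hv : ∀ I, 0 ≤ v I) {e : X} (he : ‖e‖ = 1) {g : ℝ → ℝ≥0∞}
    (hg : Measurable g) (hvg : ∀ I ∈ R, ∀ t ∈ toSet I, ENNReal.ofReal (v I) ≤ g t) :
    hpIntegral p R (fun I => v I ^ (1 / p) • e) ≤
      (∑ I ∈ R, ENNReal.ofReal (v I) * ENNReal.ofReal (len I)) ^ (p / 2) *
        (∫⁻ t in Set.Icc (0 : ℝ) 1, g t) ^ (1 - p / 2) := by
  have hmeas : Measurable fun t =>
      ∑ I ∈ R, (toSet I).indicator (fun _ => ENNReal.ofReal (v I)) t :=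
    Finset.measurable_fun_sum _ fun I _ => measurable_const.indicator (measurableSet_toSet I)
  have hsum : ∫⁻ t in Set.Icc (0 : ℝ) 1,
      ∑ I ∈ R, (toSet I).indicator (fun _ => ENNReal.ofReal (v I)) t =
        ∑ I ∈ R, ENNReal.ofReal (v I) * ENNReal.ofReal (len I) :=
    lintegral_sum_indicator_toSet R id _
  rw [← hsum]
  calc hpIntegral p R (fun I => v I ^ (1 / p) • e)
      ≤ ∫⁻ t in Set.Icc (0 : ℝ) 1,
          (∑ I ∈ R, (toSet I).indicator (fun _ => ENNReal.ofReal (v I)) t) ^ (p / 2) *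
            g t ^ (1 - p / 2) :=
        lintegral_mono fun t =>
          ofReal_sqFn_rpow_smul_const_le hp₀ hp₂ hv he fun I hI ht => hvg I hI t ht
    _ ≤ _ := ENNReal.lintegral_mul_norm_pow_le hmeas.aemeasurable hg.aemeasurable
        (by positivity) (by linarith) (by ring)

lemma le_rpow_mul_of_le_mul_rpow_mul_rpow {p : ℝ} (hp : p < 2) {V K B : ℝ≥0∞}
    (hV : V ≠ ⊤) (h : V ≤ K * (V ^ (p / 2) * B ^ (1 - p / 2))) : V ≤ K ^ (2 / (2 - p)) * B := by
  obtain rfl | hV₀ := eq_or_ne V 0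
  · exact zero_le
  have hexp : 0 < 1 - p / 2 := by linarith
  have hinv : (1 - p / 2)⁻¹ = 2 / (2 - p) := by
    rw [one_sub_div two_ne_zero, inv_div]
  have hVp₀ : V ^ (p / 2) ≠ 0 := fun h₀ => (ENNReal.rpow_eq_zero_iff.1 h₀).elim
    (fun h => hV₀ h.1) fun h => hV h.1
  have hVp : V ^ (p / 2) ≠ ⊤ := ENNReal.rpow_ne_top_of_ne_zero hV₀ hV
  have hcancel : V ^ (1 - p / 2) ≤ K * B ^ (1 - p / 2) := by
    rw [ENNReal.rpow_sub _ _ hV₀ hV, ENNReal.rpow_one, ENNReal.div_le_iff hVp₀ hVp]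
    calc V ≤ K * (V ^ (p / 2) * B ^ (1 - p / 2)) := h
      _ = K * B ^ (1 - p / 2) * V ^ (p / 2) := by ring
  rw [← ENNReal.le_rpow_inv_iff hexp, ENNReal.mul_rpow_of_nonneg _ _ (inv_nonneg.2 hexp.le),
    ENNReal.rpow_rpow_inv hexp.ne', hinv] at hcancel
  exact hcancel

end MaximalBound

section RearrangedMajorant

variable {X : Type*} [NormedAddCommGroup X] [NormedSpace ℝ X]

lemma lintegral_sum_indicator_mul_len_div_len (R : Finset DyadicI) (τ : DyadicI → DyadicI)
    {v : DyadicI → ℝ} (hv : ∀ I, 0 ≤ v I) :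
    ∫⁻ t in Set.Icc (0 : ℝ) 1, ∑ I ∈ R, (toSet (τ I)).indicator
        (fun _ => ENNReal.ofReal (v I * (len I / len (τ I)))) t =
      ∑ I ∈ R, ENNReal.ofReal (v I) * ENNReal.ofReal (len I) := by
  rw [lintegral_sum_indicator_toSet]
  refine Finset.sum_congr rfl fun I _ => ?_
  rw [← ENNReal.ofReal_mul (mul_nonneg (hv I) (div_nonneg I.len_pos.le (τ I).len_pos.le)),
    ← ENNReal.ofReal_mul (hv I), mul_assoc, div_mul_cancel₀ _ (τ I).len_pos.ne']

lemma ofReal_mul_len_div_len_le_sqFn_rpow {p : ℝ} (hp : 0 < p) {τ : DyadicI → DyadicI}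
    (hτ : Function.Injective τ) {R : Finset DyadicI} {v : DyadicI → ℝ} (hv : ∀ I, 0 ≤ v I)
    {e : X} (he : ‖e‖ = 1) {J : DyadicI} (hJ : J ∈ R) {t : ℝ} (ht : t ∈ toSet (τ J)) :
    ENNReal.ofReal (v J * (len J / len (τ J))) ≤
      ENNReal.ofReal (sqFn (R.image τ) (rearrCoef τ p R fun I => v I ^ (1 / p) • e) t) ^ p := by
  have hratio : 0 ≤ len J / len (τ J) := div_nonneg J.len_pos.le (τ J).len_pos.le
  have hnorm := norm_le_sqFn (rearrCoef τ p R fun I => v I ^ (1 / p) • e)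
    (Finset.mem_image_of_mem τ hJ) ht
  rw [rearrCoef_apply hτ p _ hJ, norm_smul, norm_smul, he, mul_one, mul_comm,
    Real.norm_of_nonneg (Real.rpow_nonneg hratio _),
    Real.norm_of_nonneg (Real.rpow_nonneg (hv J) _), ← Real.mul_rpow (hv J) hratio] at hnorm
  rw [← ENNReal.rpow_inv_le_iff hp, ← one_div,
    ENNReal.ofReal_rpow_of_nonneg (mul_nonneg (hv J) hratio) (by positivity)]
  exact ENNReal.ofReal_le_ofReal hnorm

lemma sum_mul_len_le_hpIntegral_rearrCoef {p : ℝ} (hp : 0 < p) {τ : DyadicI → DyadicI}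
    (hτ : Function.Injective τ) {R : Finset DyadicI} {v : DyadicI → ℝ} (hv : ∀ I, 0 ≤ v I)
    {e : X} (he : ‖e‖ = 1)
    (hR : ∀ I ∈ R, ∀ t ∈ toSet (τ I), ∃ J ∈ R, t ∈ toSet (τ J) ∧
      ∑ K ∈ R with t ∈ toSet (τ K), v K * (len K / len (τ K)) ≤ 4 * (v J * (len J / len (τ J)))) :
    ∑ I ∈ R, ENNReal.ofReal (v I) * ENNReal.ofReal (len I) ≤
      4 * hpIntegral p (R.image τ) (rearrCoef τ p R fun I => v I ^ (1 / p) • e) := by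
  let z : DyadicI → X := fun I => v I ^ (1 / p) • e
  have hm (I : DyadicI) : 0 ≤ v I * (len I / len (τ I)) :=
    mul_nonneg (hv I) (div_nonneg I.len_pos.le (τ I).len_pos.le)
  have hpointwise (t : ℝ) :
      ∑ I ∈ R, (toSet (τ I)).indicator
        (fun _ => ENNReal.ofReal (v I * (len I / len (τ I)))) t ≤
      4 * ENNReal.ofReal (sqFn (R.image τ) (rearrCoef τ p R z) t) ^ p := by
    simp only [Set.indicator_apply]
    rw [← Finset.sum_filter]
    obtain hempty | ⟨I, hI⟩ := (R.filter fun K => t ∈ toSet (τ K)).eq_empty_or_nonempty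
    · simp [hempty]
    · obtain ⟨J, hJ, htJ, hle⟩ := hR I (Finset.mem_filter.1 hI).1 t (Finset.mem_filter.1 hI).2
      calc ∑ K ∈ R with t ∈ toSet (τ K), ENNReal.ofReal (v K * (len K / len (τ K)))
          = ENNReal.ofReal (∑ K ∈ R with t ∈ toSet (τ K), v K * (len K / len (τ K))) :=
            (ENNReal.ofReal_sum_of_nonneg fun K _ => hm K).symm
        _ ≤ ENNReal.ofReal (4 * (v J * (len J / len (τ J)))) := ENNReal.ofReal_le_ofReal hle
        _ = 4 * ENNReal.ofReal (v J * (len J / len (τ J))) := by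
            rw [ENNReal.ofReal_mul (by norm_num), ENNReal.ofReal_ofNat]
        _ ≤ _ := by gcongr; exact ofReal_mul_len_div_len_le_sqFn_rpow hp hτ hv he hJ htJ
  calc ∑ I ∈ R, ENNReal.ofReal (v I) * ENNReal.ofReal (len I)
      = ∫⁻ t in Set.Icc (0 : ℝ) 1, ∑ I ∈ R, (toSet (τ I)).indicator
          (fun _ => ENNReal.ofReal (v I * (len I / len (τ I)))) t :=
        (lintegral_sum_indicator_mul_len_div_len R τ hv).symm
    _ ≤ ∫⁻ t in Set.Icc (0 : ℝ) 1,
          4 * ENNReal.ofReal (sqFn (R.image τ) (rearrCoef τ p R z) t) ^ p :=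
        lintegral_mono hpointwise
    _ = 4 * hpIntegral p (R.image τ) (rearrCoef τ p R z) :=
        lintegral_const_mul _ (measurable_ofReal_sqFn_rpow _ _ p)

/-- On a sparse subfamily the square function of `T_{τ,p} f` dominates the rearranged weights, so
the bound for `T_{τ,p}` turns into a self-improving bound for `∑ v_I |I|`. -/
lemma sum_mul_len_le_rpow_mul_lintegral {p : ℝ} (hp₀ : 0 < p) (hp₂ : p < 2)
    {τ : DyadicI → DyadicI} (hτ : Function.Injective τ) (hK : hpOpNorm τ p X ≠ ⊤)
    {R : Finset DyadicI} {v : DyadicI → ℝ} (hv : ∀ I, 0 ≤ v I) {e : X} (he : ‖e‖ = 1)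
    (hR : ∀ I ∈ R, ∀ t ∈ toSet (τ I), ∃ J ∈ R, t ∈ toSet (τ J) ∧
      ∑ K ∈ R with t ∈ toSet (τ K), v K * (len K / len (τ K)) ≤ 4 * (v J * (len J / len (τ J))))
    {g : ℝ → ℝ≥0∞} (hg : Measurable g)
    (hvg : ∀ I ∈ R, ∀ t ∈ toSet I, ENNReal.ofReal (v I) ≤ g t) :
    ∑ I ∈ R, ENNReal.ofReal (v I) * ENNReal.ofReal (len I) ≤
      (4 * hpOpNorm τ p X ^ p) ^ (2 / (2 - p)) * ∫⁻ t in Set.Icc (0 : ℝ) 1, g t := by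
  set V := ∑ I ∈ R, ENNReal.ofReal (v I) * ENNReal.ofReal (len I)
  have hV : V ≠ ⊤ := ENNReal.sum_ne_top.2 fun I _ =>
    ENNReal.mul_ne_top ENNReal.ofReal_ne_top ENNReal.ofReal_ne_top
  refine le_rpow_mul_of_le_mul_rpow_mul_rpow hp₂ hV ?_
  calc V ≤ 4 * hpIntegral p (R.image τ) (rearrCoef τ p R fun I => v I ^ (1 / p) • e) :=
        sum_mul_len_le_hpIntegral_rearrCoef hp₀ hτ hv he hR
    _ ≤ 4 * (hpOpNorm τ p X ^ p * hpIntegral p R fun I => v I ^ (1 / p) • e) := by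
        gcongr
        exact hpIntegral_rearrCoef_le hp₀ hK R _
    _ ≤ 4 * (hpOpNorm τ p X ^ p *
          (V ^ (p / 2) * (∫⁻ t in Set.Icc (0 : ℝ) 1, g t) ^ (1 - p / 2))) := by
        gcongr
        exact hpIntegral_rpow_smul_const_le hp₀ hp₂.le hv he hg hvg
    _ = _ := (mul_assoc _ _ _).symm

lemma exists_rearranged_majorant [Nontrivial X] {p : ℝ} (hp₀ : 0 < p) (hp₂ : p < 2)
    {τ : DyadicI → DyadicI} (hτ : Function.Injective τ) (hK : hpOpNorm τ p X ≠ ⊤)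
    (s : Finset DyadicI) {v : DyadicI → ℝ} (hv : ∀ I, 0 ≤ v I) {g : ℝ → ℝ≥0∞}
    (hg : Measurable g) (hvg : ∀ I ∈ s, ∀ t ∈ toSet I, ENNReal.ofReal (v I) ≤ g t) :
    ∃ M : ℝ → ℝ≥0, Measurable M ∧
      (∀ I ∈ s, ∀ t ∈ toSet (τ I), v I * (len I / len (τ I)) ≤ M t) ∧
      ∫⁻ t in Set.Icc (0 : ℝ) 1, M t ≤
        2 * ((4 * hpOpNorm τ p X ^ p) ^ (2 / (2 - p)) * ∫⁻ t in Set.Icc (0 : ℝ) 1, g t) := by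
  obtain ⟨e, he⟩ := exists_norm_eq X zero_le_one
  let m (I : DyadicI) : ℝ≥0 := (v I * (len I / len (τ I))).toNNReal
  have hratio (I : DyadicI) : 0 < len I / len (τ I) := div_pos I.len_pos (τ I).len_pos
  have hm (I : DyadicI) : (m I : ℝ) = v I * (len I / len (τ I)) :=
    Real.coe_toNNReal _ (mul_nonneg (hv I) (hratio I).le)
  obtain ⟨R, hRs, hcover, hsparse⟩ := exists_sparse_subset hτ
    (fun I => v I * (len I / len (τ I))) (s := s.filter (0 < v ·))
    fun I hI => mul_pos (Finset.mem_filter.1 hI).2 (hratio I)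
  let ν (t : ℝ) : ℝ≥0 := ∑ I ∈ R, (toSet (τ I)).indicator (fun _ => m I) t
  have hν : Measurable ν := Finset.measurable_fun_sum _ fun I _ =>
    measurable_const.indicator (measurableSet_toSet (τ I))
  refine ⟨fun t => 2 * ν t, hν.const_mul 2, fun I hI t ht => ?_, ?_⟩
  · obtain hvI | hvI := (hv I).eq_or_lt
    · rw [← hvI, zero_mul]
      exact NNReal.coe_nonneg _
    obtain ⟨J, hJ, htJ, hle⟩ := hcover I (Finset.mem_filter.2 ⟨hI, hvI⟩) t ht
    have hsingle : m J ≤ ν t := by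
      simpa [htJ] using Finset.single_le_sum (fun I _ => zero_le)
        hJ (f := fun I => (toSet (τ I)).indicator (fun _ => m I) t)
    refine hle.trans ?_
    rw [← hm J]
    exact_mod_cast mul_le_mul_right hsingle 2
  · have hintegral : ∫⁻ t in Set.Icc (0 : ℝ) 1, ν t =
        ∑ I ∈ R, ENNReal.ofReal (v I) * ENNReal.ofReal (len I) := by
      rw [← lintegral_sum_indicator_mul_len_div_len R τ hv]
      simp only [ν, ENNReal.ofNNReal_finsetSum, ENNReal.coe_indicator]
      rfl
    simp only [ENNReal.coe_mul, ENNReal.coe_ofNat]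
    rw [lintegral_const_mul _ hν.coe_nnreal_ennreal, hintegral]
    gcongr
    exact sum_mul_len_le_rpow_mul_lintegral hp₀ hp₂ hτ hK hv he hsparse hg fun I hI =>
      hvg I (Finset.mem_filter.1 (hRs hI)).1

end RearrangedMajorant

section Extrapolation

variable {X : Type*} [NormedAddCommGroup X] [NormedSpace ℝ X]

lemma rearrCoef_eq_rpow_smul_rearrCoef {p q : ℝ} (hq : 0 < q) (hqp : q ≤ p)
    {τ : DyadicI → DyadicI} (hτ : Function.Injective τ) {s : Finset DyadicI} {x : DyadicI → X}
    {F : DyadicI → ℝ} (hF : ∀ I, 0 ≤ F I) {I : DyadicI} (hI : I ∈ s)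
    (hx : F I = 0 → x I = 0) :
    rearrCoef τ q s x (τ I) = (F I ^ q * (len I / len (τ I))) ^ (1 / q - 1 / p) •
      rearrCoef τ p s (fun I => F I ^ (q / p - 1) • x I) (τ I) := by
  have hratio : 0 < len I / len (τ I) := div_pos I.len_pos (τ I).len_pos
  rw [rearrCoef_apply hτ q x hI, rearrCoef_apply hτ p _ hI]
  obtain hFI | hFI := (hF I).eq_or_lt
  · simp [hx hFI.symm]
  have hweight : (F I ^ q) ^ (1 / q - 1 / p) * F I ^ (q / p - 1) = 1 := by
    have hp : 0 < p := hq.trans_le hqp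
    have hexp : q * (1 / q - 1 / p) + (q / p - 1) = 0 := by field_simp; ring
    rw [← Real.rpow_mul hFI.le, ← Real.rpow_add hFI, hexp, Real.rpow_zero]
  have hlen : (len I / len (τ I)) ^ (1 / q - 1 / p) * (len I / len (τ I)) ^ (1 / p) =
      (len I / len (τ I)) ^ (1 / q) := by
    rw [← Real.rpow_add hratio, sub_add_cancel]
  rw [smul_smul, smul_smul, Real.mul_rpow (by positivity) hratio.le, ← hlen]
  congr 1
  linear_combination (-(len I / len (τ I)) ^ (1 / q - 1 / p) *
    (len I / len (τ I)) ^ (1 / p)) * hweight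

lemma sqFn_rearrCoef_le_rpow_mul {p q : ℝ} (hq : 0 < q) (hqp : q ≤ p) {τ : DyadicI → DyadicI}
    (hτ : Function.Injective τ) {s : Finset DyadicI} {x : DyadicI → X} {F : DyadicI → ℝ}
    (hF : ∀ I, 0 ≤ F I) (hx : ∀ I ∈ s, F I = 0 → x I = 0) {t : ℝ} {Λ : ℝ≥0}
    (hΛ : ∀ I ∈ s, t ∈ toSet (τ I) → F I ^ q * (len I / len (τ I)) ≤ Λ) :
    sqFn (s.image τ) (rearrCoef τ q s x) t ≤ (Λ : ℝ) ^ (1 / q - 1 / p) *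
      sqFn (s.image τ) (rearrCoef τ p s fun I => F I ^ (q / p - 1) • x I) t := by
  let y : DyadicI → X := fun I => F I ^ (q / p - 1) • x I
  let c : DyadicI → ℝ := fun J => {J | t ∈ toSet J}.indicator (fun J =>
    (F (Function.invFun τ J) ^ q * (len (Function.invFun τ J) / len J)) ^ (1 / q - 1 / p)) J
  have hinv (I : DyadicI) : Function.invFun τ (τ I) = I := Function.leftInverse_invFun hτ I
  have hexp : 0 ≤ 1 / q - 1 / p := sub_nonneg.2 (one_div_le_one_div_of_le hq hqp)
  have hc : ∀ J ∈ s.image τ, |c J| ≤ (Λ : ℝ) ^ (1 / q - 1 / p) := fun J hJ => by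
    obtain ⟨I, hI, rfl⟩ := Finset.mem_image.1 hJ
    have hbase : 0 ≤ F I ^ q * (len I / len (τ I)) :=
      mul_nonneg (Real.rpow_nonneg (hF I) q) (div_nonneg I.len_pos.le (τ I).len_pos.le)
    by_cases ht : t ∈ toSet (τ I)
    · simpa [c, ht, hinv, abs_of_nonneg (Real.rpow_nonneg hbase _)] using
        Real.rpow_le_rpow hbase (hΛ I hI ht) hexp
    · simpa [c, ht] using Real.rpow_nonneg Λ.coe_nonneg _
  have hsplit : sqFn (s.image τ) (rearrCoef τ q s x) t = rademacherSeminorm (s.image τ)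
      fun J => c J • {J | t ∈ toSet J}.indicator (rearrCoef τ p s y) J := by
    rw [sqFn_eq_rademacherSeminorm_indicator]
    refine rademacherSeminorm_congr fun J hJ => ?_
    obtain ⟨I, hI, rfl⟩ := Finset.mem_image.1 hJ
    by_cases ht : t ∈ toSet (τ I)
    · simpa [c, ht, hinv] using rearrCoef_eq_rpow_smul_rearrCoef hq hqp hτ hF hI (hx I hI)
    · simp [ht]
  rw [hsplit, sqFn_eq_rademacherSeminorm_indicator]
  exact rademacherSeminorm_smul_le_mul _ (Real.rpow_nonneg Λ.coe_nonneg _) hc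

lemma hpIntegral_rearrCoef_le_mul_lintegral {p q : ℝ} (hq : 0 < q) (hqp : q ≤ p)
    {τ : DyadicI → DyadicI} (hτ : Function.Injective τ) {s : Finset DyadicI} {x : DyadicI → X}
    {F : DyadicI → ℝ} (hF : ∀ I, 0 ≤ F I) (hx : ∀ I ∈ s, F I = 0 → x I = 0) {M : ℝ → ℝ≥0}
    (hM : Measurable M)
    (hFM : ∀ I ∈ s, ∀ t ∈ toSet (τ I), F I ^ q * (len I / len (τ I)) ≤ M t) :
    hpIntegral q (s.image τ) (rearrCoef τ q s x) ≤
      hpIntegral p (s.image τ) (rearrCoef τ p s fun I => F I ^ (q / p - 1) • x I) ^ (q / p) *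
        (∫⁻ t in Set.Icc (0 : ℝ) 1, M t) ^ (1 - q / p) := by
  have hp : 0 < p := hq.trans_le hqp
  have hθ : 0 ≤ 1 - q / p := sub_nonneg.2 ((div_le_one hp).2 hqp)
  have hexp : 0 ≤ 1 / q - 1 / p := sub_nonneg.2 (one_div_le_one_div_of_le hq hqp)
  let G (t : ℝ) : ℝ := sqFn (s.image τ) (rearrCoef τ p s fun I => F I ^ (q / p - 1) • x I) t
  have hpointwise (t : ℝ) : ENNReal.ofReal (sqFn (s.image τ) (rearrCoef τ q s x) t) ^ q ≤
      (ENNReal.ofReal (G t) ^ p) ^ (q / p) * (M t : ℝ≥0∞) ^ (1 - q / p) := by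
    calc ENNReal.ofReal (sqFn (s.image τ) (rearrCoef τ q s x) t) ^ q
        ≤ ENNReal.ofReal ((M t : ℝ) ^ (1 / q - 1 / p) * G t) ^ q := by
          gcongr
          exact sqFn_rearrCoef_le_rpow_mul hq hqp hτ hF hx fun I hI => hFM I hI t
      _ = ((M t : ℝ≥0∞) ^ (1 / q - 1 / p) * ENNReal.ofReal (G t)) ^ q := by
          rw [ENNReal.ofReal_mul (Real.rpow_nonneg (M t).coe_nonneg _),
            ← ENNReal.ofReal_rpow_of_nonneg (M t).coe_nonneg hexp, ENNReal.ofReal_coe_nnreal]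
      _ = (ENNReal.ofReal (G t) ^ p) ^ (q / p) * (M t : ℝ≥0∞) ^ (1 - q / p) := by
          rw [ENNReal.mul_rpow_of_nonneg _ _ hq.le, ← ENNReal.rpow_mul, ← ENNReal.rpow_mul,
            mul_comm, mul_div_cancel₀ q hp.ne', sub_mul, one_div_mul_cancel hq.ne',
            one_div_mul_eq_div]
  exact (lintegral_mono hpointwise).trans <| ENNReal.lintegral_mul_norm_pow_le
    (measurable_ofReal_sqFn_rpow _ _ p).aemeasurable hM.coe_nnreal_ennreal.aemeasurable
    (by positivity) hθ (add_sub_cancel _ _)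

lemma hpIntegral_stoppedSqFn_rpow_smul_le {p q : ℝ} (hq : 0 < q) (hqp : q ≤ p)
    (s : Finset DyadicI) (x : DyadicI → X) :
    hpIntegral p s (fun I => stoppedSqFn s x I ^ (q / p - 1) • x I) ≤
      ENNReal.ofReal (p / q) ^ p * hpIntegral q s x := by
  have hp : 0 < p := hq.trans_le hqp
  unfold hpIntegral
  rw [← lintegral_const_mul _ (measurable_ofReal_sqFn_rpow s x q)]
  refine lintegral_mono fun t => ?_
  calc ENNReal.ofReal (sqFn s (fun I => stoppedSqFn s x I ^ (q / p - 1) • x I) t) ^ p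
      ≤ ENNReal.ofReal ((q / p)⁻¹ * sqFn s x t ^ (q / p)) ^ p := by
        gcongr
        exact sqFn_stoppedSqFn_rpow_smul_le s x (by positivity) ((div_le_one hp).2 hqp) t
    _ = ENNReal.ofReal (p / q) ^ p * ENNReal.ofReal (sqFn s x t) ^ q := by
        rw [inv_div, ENNReal.ofReal_mul (by positivity),
          ← ENNReal.ofReal_rpow_of_nonneg (sqFn_nonneg s x t) (by positivity),
          ENNReal.mul_rpow_of_nonneg _ _ hp.le, ← ENNReal.rpow_mul, div_mul_cancel₀ q hp.ne']

lemma hpIntegral_rearrCoef_le_of_le [Nontrivial X] {p q : ℝ} (hq : 0 < q) (hqp : q ≤ p)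
    (hp₂ : p < 2) {τ : DyadicI → DyadicI} (hτ : Function.Injective τ)
    (hK : hpOpNorm τ p X ≠ ⊤) (s : Finset DyadicI) (x : DyadicI → X) :
    hpIntegral q (s.image τ) (rearrCoef τ q s x) ≤
      (hpOpNorm τ p X ^ p * (ENNReal.ofReal (p / q) ^ p * hpIntegral q s x)) ^ (q / p) *
        (2 * ((4 * hpOpNorm τ p X ^ p) ^ (2 / (2 - p)) * hpIntegral q s x)) ^ (1 - q / p) := by
  have hp₀ : 0 < p := hq.trans_le hqp
  let F : DyadicI → ℝ := stoppedSqFn s x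
  have hF : ∀ I, 0 ≤ F I := stoppedSqFn_nonneg s x
  obtain ⟨M, hM, hFM, hM_le⟩ := exists_rearranged_majorant (X := X) hp₀ hp₂ hτ hK s
    (v := fun I => F I ^ q) (fun I => Real.rpow_nonneg (hF I) q)
    (measurable_ofReal_sqFn_rpow s x q) fun I _ t ht => by
      rw [← ENNReal.ofReal_rpow_of_nonneg (hF I) hq.le]
      gcongr
      exact stoppedSqFn_le_sqFn s x ht
  refine (hpIntegral_rearrCoef_le_mul_lintegral hq hqp hτ hF
    (fun I hI => eq_zero_of_stoppedSqFn_eq_zero hI) hM hFM).trans ?_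
  have hθ : 0 ≤ 1 - q / p := sub_nonneg.2 ((div_le_one hp₀).2 hqp)
  gcongr
  · exact (hpIntegral_rearrCoef_le hp₀ hK s _).trans (by
      gcongr
      exact hpIntegral_stoppedSqFn_rpow_smul_le hq hqp s x)
  · exact hM_le

/-- The constant `A(p, q)`: the factor `p / q` comes from the Abel summation, `4 ^ (2 / (2 - p))`
from the self-improving bound on sparse families, and `2` from rounding weights to powers of two. -/
def rearrConst (p q : ℝ) : ℝ :=
  ((p / q) ^ q * (2 * 4 ^ (2 / (2 - p))) ^ (1 - q / p)) ^ (1 / (2 - q))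

lemma rearrConst_pos {p q : ℝ} (hp : 0 < p) (hq : 0 < q) : 0 < rearrConst p q := by
  unfold rearrConst
  positivity

lemma ofReal_rearrConst_rpow {p q : ℝ} (hq : 0 < q) (hqp : q ≤ p) (hp₂ : p < 2) :
    ENNReal.ofReal (rearrConst p q) ^ (2 - q) = ENNReal.ofReal (p / q) ^ q *
      (2 * 4 ^ (2 / (2 - p))) ^ (1 - q / p) := by
  have hp₀ : 0 < p := hq.trans_le hqp
  have hθ : 0 ≤ 1 - q / p := sub_nonneg.2 ((div_le_one hp₀).2 hqp)
  have hexp : 0 ≤ 2 / (2 - p) := div_nonneg zero_le_two (by linarith)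
  have hq₂ : 0 < 2 - q := by linarith
  rw [rearrConst, one_div, ENNReal.ofReal_rpow_of_nonneg (by positivity) hq₂.le,
    Real.rpow_inv_rpow (by positivity) hq₂.ne', ENNReal.ofReal_mul (by positivity),
    ← ENNReal.ofReal_rpow_of_nonneg (by positivity) hq.le,
    ← ENNReal.ofReal_rpow_of_nonneg (by positivity) hθ, ENNReal.ofReal_mul zero_le_two,
    ← ENNReal.ofReal_rpow_of_nonneg zero_le_four hexp, ENNReal.ofReal_ofNat,
    ENNReal.ofReal_ofNat]

lemma rpow_mul_rpow_eq_rearrConst_mul {p q : ℝ} (hq : 0 < q) (hqp : q ≤ p) (hp₂ : p < 2)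
    (K B : ℝ≥0∞) :
    (K ^ p * (ENNReal.ofReal (p / q) ^ p * B)) ^ (q / p) *
        (2 * ((4 * K ^ p) ^ (2 / (2 - p)) * B)) ^ (1 - q / p) =
      (ENNReal.ofReal (rearrConst p q) * K ^ (p / (2 - p))) ^ (2 - q) * B := by
  have hp₀ : 0 < p := hq.trans_le hqp
  have hθ₀ : 0 ≤ q / p := by positivity
  have hθ : 0 ≤ 1 - q / p := sub_nonneg.2 ((div_le_one hp₀).2 hqp)
  have hexp : 0 ≤ 2 / (2 - p) := div_nonneg zero_le_two (by linarith)
  have hp₂' : 2 - p ≠ 0 := by linarith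
  have hB : B ^ (q / p) * B ^ (1 - q / p) = B := by
    rw [← ENNReal.rpow_add_of_nonneg _ _ hθ₀ hθ, add_sub_cancel, ENNReal.rpow_one]
  have hK : K ^ q * K ^ (p * (2 / (2 - p)) * (1 - q / p)) = K ^ (p / (2 - p) * (2 - q)) := by
    rw [← ENNReal.rpow_add_of_nonneg _ _ hq.le (by positivity)]
    congr 1
    field_simp
    ring
  have hpq : p * (q / p) = q := mul_div_cancel₀ q hp₀.ne'
  rw [ENNReal.mul_rpow_of_nonneg (ENNReal.ofReal _) _ (by linarith : (0 : ℝ) ≤ 2 - q),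
    ofReal_rearrConst_rpow hq hqp hp₂, ← ENNReal.rpow_mul, ← hK]
  simp only [ENNReal.mul_rpow_of_nonneg _ _ hθ₀, ENNReal.mul_rpow_of_nonneg _ _ hθ,
    ENNReal.mul_rpow_of_nonneg _ _ hexp, ← ENNReal.rpow_mul, hpq]
  nth_rw 3 [← hB]
  ring

theorem statement0_general {p q : ℝ} (hq : 0 < q) (hqp : q ≤ p) (hp₂ : p < 2)
    {τ : DyadicI → DyadicI} (hτ : Function.Injective τ) :
    hpOpNorm τ q X ^ (q / (2 - q)) ≤
      ENNReal.ofReal (rearrConst p q) * hpOpNorm τ p X ^ (p / (2 - p)) := by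
  have hp₀ : 0 < p := hq.trans_le hqp
  have hq₂ : 0 < 2 - q := by linarith
  have hA : 0 < rearrConst p q := rearrConst_pos hp₀ hq
  obtain hX | hX := subsingleton_or_nontrivial X
  · rw [hpOpNorm_eq_zero_of_subsingleton hq, ENNReal.zero_rpow_of_pos (div_pos hq hq₂)]
    exact zero_le
  obtain hK | hK := eq_or_ne (hpOpNorm τ p X) ⊤
  · rw [hK, ENNReal.top_rpow_of_pos (div_pos hp₀ (sub_pos.2 hp₂)),
      ENNReal.mul_top (ENNReal.ofReal_pos.2 hA).ne']
    exact le_top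
  rw [div_eq_mul_inv, ENNReal.rpow_mul, ENNReal.rpow_inv_le_iff hq₂, ← ENNReal.le_rpow_inv_iff hq,
    hpOpNorm_le_iff hq]
  intro s x hx
  rw [ENNReal.rpow_inv_rpow hq.ne']
  calc hpIntegral q (s.image τ) (rearrCoef τ q s x)
      ≤ _ := hpIntegral_rearrCoef_le_of_le hq hqp hp₂ hτ hK s x
    _ = (ENNReal.ofReal (rearrConst p q) * hpOpNorm τ p X ^ (p / (2 - p))) ^ (2 - q) *
          hpIntegral q s x := rpow_mul_rpow_eq_rearrConst_mul hq hqp hp₂ _ _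
    _ ≤ _ := mul_le_of_le_one_right' hx

end Extrapolation

/-- Let `0 < q ≤ p < 2`. There is a constant `A(p,q) > 0`, depending
only on `p` and `q`, such that for every Banach space `X` and every injective
`τ : D → D`,
`‖T_{τ,q} ⊗ Id_X‖_q^{q/(2-q)} ≤ A(p,q) ‖T_{τ,p} ⊗ Id_X‖_p^{p/(2-p)}` in `[0,∞]`. -/
theorem statement0 (p q : ℝ) (hq : 0 < q) (hqp : q ≤ p) (hp : p < 2) :
    ∃ A : ℝ, 0 < A ∧
      ∀ (X : Type*) [NormedAddCommGroup X] [NormedSpace ℝ X] [CompleteSpace X]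
        (τ : DyadicI → DyadicI), Function.Injective τ →
          hpOpNorm τ q X ^ (q / (2 - q)) ≤
            ENNReal.ofReal A * hpOpNorm τ p X ^ (p / (2 - p)) :=
  ⟨rearrConst p q, rearrConst_pos (hq.trans_le hqp) hq, fun _ _ _ _ _ hτ =>
    statement0_general hq hqp hp hτ⟩
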